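/- Eigenvalue bound for Algorithm I's matrix rate: assume X has full rank m ≥ 2 and w* ∈ Ω is a global maximizer of det M(w) over Ω̄ with all coordinates positive. Then all eigenvalues of R(0), the Jacobian at w* of the Algorithm I map T_0(w)_i = w_i·(x_iᵀ M(w)^{-1} x_i)/m, lie in the interval [0, 1]. -/

import Mathlib

open Matrix Filter

/-- The information matrix `M(w) = ∑ i, w_i x_i x_iᵀ`. -/
noncomputable def Mmat {n m : ℕ} (x : Fin n → Fin m → ℝ) (w : Fin n → ℝ) :
    Matrix (Fin m) (Fin m) ℝ :=
  ∑ i, w i • Matrix.vecMulVec (x i) (x i)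

/-- The multiplicative update map `T_α(w)_i = w_i (x_iᵀ M(w)⁻¹ x_i − α)/(m − α)`. -/
noncomputable def Talg {n m : ℕ} (x : Fin n → Fin m → ℝ) (α : ℝ) (w : Fin n → ℝ) :
    Fin n → ℝ :=
  fun i => w i * ((x i ⬝ᵥ (Mmat x w)⁻¹ *ᵥ x i) - α) / ((m : ℝ) - α)

section helpers

variable {n m : ℕ}

lemma Mmat_mulVec (x : Fin n → Fin m → ℝ) (w : Fin n → ℝ) (z : Fin m → ℝ) :
    Mmat x w *ᵥ z = ∑ i, (w i * (x i ⬝ᵥ z)) • x i := by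
  unfold Mmat
  rw [Matrix.sum_mulVec]
  refine Finset.sum_congr rfl fun i _ => ?_
  rw [Matrix.smul_mulVec, Matrix.vecMulVec_mulVec]
  ext k
  simp
  ring

lemma Mmat_transpose (x : Fin n → Fin m → ℝ) (w : Fin n → ℝ) :
    (Mmat x w)ᵀ = Mmat x w := by
  unfold Mmat
  rw [Matrix.transpose_sum]
  refine Finset.sum_congr rfl fun i _ => ?_
  rw [Matrix.transpose_smul, Matrix.transpose_vecMulVec]

lemma inj_of_rank (x : Fin n → Fin m → ℝ) (hrank : (Matrix.of x).rank = m)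
    (z : Fin m → ℝ) (hz : ∀ i, x i ⬝ᵥ z = 0) : z = 0 := by
  have h := LinearMap.finrank_range_add_finrank_ker (Matrix.of x).mulVecLin
  have h2 : Module.finrank ℝ (LinearMap.range (Matrix.of x).mulVecLin) = m := hrank
  rw [h2, Module.finrank_fin_fun] at h
  have h3 : Module.finrank ℝ (LinearMap.ker (Matrix.of x).mulVecLin) = 0 := by omega
  have h4 := Submodule.finrank_eq_zero.mp h3
  have : z ∈ LinearMap.ker (Matrix.of x).mulVecLin := by
    rw [LinearMap.mem_ker]
    ext i
    simpa [Matrix.mulVec] using hz i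
  rw [h4] at this
  simpa using this

lemma Mmat_quad (x : Fin n → Fin m → ℝ) (w : Fin n → ℝ) (z : Fin m → ℝ) :
    z ⬝ᵥ (Mmat x w *ᵥ z) = ∑ i, w i * (x i ⬝ᵥ z) ^ 2 := by
  rw [Mmat_mulVec, dotProduct_sum]
  refine Finset.sum_congr rfl fun i _ => ?_
  rw [dotProduct_smul, dotProduct_comm z, smul_eq_mul]
  ring

lemma Mmat_posDef (x : Fin n → Fin m → ℝ) (hrank : (Matrix.of x).rank = m)
    (w : Fin n → ℝ) (hpos : ∀ i, 0 < w i) : (Mmat x w).PosDef := by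
  refine Matrix.PosDef.of_dotProduct_mulVec_pos ?_ ?_
  · rw [Matrix.IsHermitian, Matrix.conjTranspose_eq_transpose_of_trivial, Mmat_transpose]
  · intro z hz
    rw [star_trivial, Mmat_quad]
    have hnn : ∀ i ∈ Finset.univ, 0 ≤ w i * (x i ⬝ᵥ z) ^ 2 :=
      fun i _ => mul_nonneg (hpos i).le (sq_nonneg _)
    refine lt_of_le_of_ne (Finset.sum_nonneg hnn) fun h => hz ?_
    have h2 := (Finset.sum_eq_zero_iff_of_nonneg hnn).mp h.symm
    refine inj_of_rank x hrank z fun i => ?_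
    have h3 := h2 i (Finset.mem_univ i)
    rcases mul_eq_zero.mp h3 with h4 | h4
    · exact absurd h4 (hpos i).ne'
    · exact pow_eq_zero_iff (two_ne_zero) |>.mp h4

lemma Mmat_add_single (x : Fin n → Fin m → ℝ) (w : Fin n → ℝ) (j : Fin n) (t : ℝ) :
    Mmat x (w + t • Pi.single j 1) = Mmat x w + t • Matrix.vecMulVec (x j) (x j) := by
  unfold Mmat
  simp only [Pi.add_apply, Pi.smul_apply, smul_eq_mul, add_smul, Finset.sum_add_distrib]
  congr 1
  rw [Finset.sum_eq_single j]
  · simp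
  · intro b _ hb
    simp [hb]
  · simp

lemma Mmat_smul (x : Fin n → Fin m → ℝ) (w : Fin n → ℝ) (c : ℝ) :
    Mmat x (c • w) = c • Mmat x w := by
  unfold Mmat
  rw [Finset.smul_sum]
  simp [mul_smul]

/-- the kernel `x_iᵀ M⁻¹ x_j` -/
noncomputable def hker (x : Fin n → Fin m → ℝ) (w : Fin n → ℝ) (i j : Fin n) : ℝ :=
  x i ⬝ᵥ (Mmat x w)⁻¹ *ᵥ x j

lemma hker_symm (x : Fin n → Fin m → ℝ) (w : Fin n → ℝ) (i j : Fin n) :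
    hker x w i j = hker x w j i := by
  unfold hker
  rw [dotProduct_comm, dotProduct_mulVec (x j), ← Matrix.mulVec_transpose,
    Matrix.transpose_nonsing_inv, Mmat_transpose]

lemma hker_repr (x : Fin n → Fin m → ℝ) (w : Fin n → ℝ) (hM : IsUnit (Mmat x w).det)
    (i j : Fin n) :
    hker x w i j = ∑ k, w k * (hker x w i k * hker x w k j) := by
  have h : Mmat x w *ᵥ ((Mmat x w)⁻¹ *ᵥ x j) = x j := by
    rw [Matrix.mulVec_mulVec, Matrix.mul_nonsing_inv _ hM, Matrix.one_mulVec]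
  rw [Mmat_mulVec] at h
  conv_lhs => rw [hker, ← h]
  rw [Matrix.mulVec_sum, dotProduct_sum]
  refine Finset.sum_congr rfl fun k _ => ?_
  rw [Matrix.mulVec_smul, dotProduct_smul, smul_eq_mul]
  unfold hker
  ring

lemma hker_trace (x : Fin n → Fin m → ℝ) (w : Fin n → ℝ) (hM : IsUnit (Mmat x w).det) :
    ∑ i, w i * hker x w i i = m := by
  have h : ((Mmat x w)⁻¹ * Mmat x w).trace = m := by
    rw [Matrix.nonsing_inv_mul _ hM]; simp
  have g : ∀ A : Matrix (Fin m) (Fin m) ℝ,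
      (A * Mmat x w).trace = ∑ i, w i * (x i ⬝ᵥ A *ᵥ x i) := by
    intro A
    unfold Mmat
    rw [Matrix.mul_sum, Matrix.trace_sum]
    refine Finset.sum_congr rfl fun i _ => ?_
    rw [Matrix.mul_smul, Matrix.trace_smul, Matrix.mul_vecMulVec, Matrix.trace_vecMulVec,
      dotProduct_comm, smul_eq_mul]
  rw [← h, g]
  rfl

lemma det_update (x : Fin n → Fin m → ℝ) (w : Fin n → ℝ) (hM : IsUnit (Mmat x w).det)
    (j : Fin n) (t : ℝ) :
    (Mmat x w + t • Matrix.vecMulVec (x j) (x j)).det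
      = (Mmat x w).det * (1 + t * hker x w j j) := by
  rw [← Matrix.smul_vecMulVec, Matrix.vecMulVec_eq Unit,
    Matrix.det_add_replicateCol_mul_replicateRow hM]
  congr 1
  rw [Matrix.det_unique, Matrix.add_apply, Matrix.one_apply_eq, Matrix.mul_assoc,
    ← Matrix.replicateCol_mulVec, Matrix.replicateRow_mul_replicateCol_apply,
    Matrix.mulVec_smul, dotProduct_smul, smul_eq_mul]
  rfl

lemma inv_update (x : Fin n → Fin m → ℝ) (w : Fin n → ℝ) (hM : IsUnit (Mmat x w).det)
    (j : Fin n) (t : ℝ) (ht : 1 + t * hker x w j j ≠ 0) (i : Fin n) :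
    hker x (w + t • Pi.single j 1) i i
      = hker x w i i - t * hker x w i j ^ 2 / (1 + t * hker x w j j) := by
  have hdet : IsUnit (Mmat x (w + t • Pi.single j 1)).det := by
    rw [Mmat_add_single, det_update x w hM]
    exact hM.mul (isUnit_iff_ne_zero.mpr ht)
  set c := t * hker x w j i / (1 + t * hker x w j j) with hc
  have key : Mmat x (w + t • Pi.single j 1) *ᵥ
      ((Mmat x w)⁻¹ *ᵥ x i - c • ((Mmat x w)⁻¹ *ᵥ x j)) = x i := by
    have hi : ∀ k, Mmat x w *ᵥ ((Mmat x w)⁻¹ *ᵥ x k) = x k := fun k => by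
      rw [Matrix.mulVec_mulVec, Matrix.mul_nonsing_inv _ hM, Matrix.one_mulVec]
    rw [Mmat_add_single, Matrix.add_mulVec, Matrix.smul_mulVec, Matrix.vecMulVec_mulVec,
      Matrix.mulVec_sub, Matrix.mulVec_smul, hi, hi, dotProduct_sub, dotProduct_smul]
    change x i - c • x j + t • (MulOpposite.op (hker x w j i - c • hker x w j j) • x j) = x i
    ext k
    simp only [Pi.add_apply, Pi.sub_apply, Pi.smul_apply, smul_eq_mul, MulOpposite.smul_eq_mul_unop,
      MulOpposite.unop_op]
    have : c * (1 + t * hker x w j j) = t * hker x w j i := by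
      rw [hc]; field_simp
    linear_combination (-x j k) * this
  have h2 : (Mmat x (w + t • Pi.single j 1))⁻¹ *ᵥ x i
      = (Mmat x w)⁻¹ *ᵥ x i - c • ((Mmat x w)⁻¹ *ᵥ x j) := by
    conv_lhs => rw [← key]
    rw [Matrix.mulVec_mulVec, Matrix.nonsing_inv_mul _ hdet, Matrix.one_mulVec]
  conv_lhs => rw [hker, h2]
  rw [dotProduct_sub, dotProduct_smul]
  change hker x w i i - c • hker x w i j = _
  rw [hc, hker_symm x w j i, smul_eq_mul]
  ring

lemma hker_diag (hm : 2 ≤ m)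
    (x : Fin n → Fin m → ℝ) (hrank : (Matrix.of x).rank = m)
    (w : Fin n → ℝ) (hpos : ∀ i, 0 < w i) (hsum : ∑ i, w i = 1)
    (hopt : ∀ v : Fin n → ℝ, (∀ i, 0 ≤ v i) → ∑ i, v i = 1 →
      (Mmat x v).det ≤ (Mmat x w).det) (i : Fin n) : hker x w i i = m := by
  have hD : 0 < (Mmat x w).det := (Mmat_posDef x hrank w hpos).det_pos
  have hM : IsUnit (Mmat x w).det := isUnit_iff_ne_zero.mpr hD.ne'
  have hm' : (2:ℝ) ≤ m := by exact_mod_cast hm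
  have hle : ∀ j, hker x w j j ≤ m := by
    intro j
    by_contra! hlt
    set d := hker x w j j with hd
    have hs : ∀ s : ℝ, 0 < s → d - m ≤ (m - 1) * d * s := by
      intro s hs
      have hs1 : 0 < 1 + s := by linarith
      have h := hopt ((1 + s)⁻¹ • (w + s • Pi.single j 1)) (by
        intro k
        have h1 : (0:ℝ) ≤ (Pi.single j 1 : Fin n → ℝ) k := by
          rw [Pi.single_apply]; split_ifs <;> norm_num
        simp only [Pi.smul_apply, Pi.add_apply, smul_eq_mul]
        have := (hpos k).le
        positivity) (by
        simp only [Pi.smul_apply, Pi.add_apply, smul_eq_mul, ← Finset.mul_sum,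
          Finset.sum_add_distrib, hsum, Finset.sum_pi_single']
        simp
        field_simp)
      rw [Mmat_smul, Mmat_add_single, Matrix.det_smul, det_update x w hM, Fintype.card_fin,
        ← hd] at h
      have h1 : ((1 + s)⁻¹) ^ m * (1 + s * d) ≤ 1 := by
        have : (Mmat x w).det * (((1 + s)⁻¹) ^ m * (1 + s * d)) ≤ (Mmat x w).det * 1 := by
          linarith
        exact le_of_mul_le_mul_left this hD
      have hb := one_add_mul_le_pow (a := (1 + s)⁻¹ - 1) (by
        have : 0 < (1 + s)⁻¹ := by positivity
        linarith) m
      rw [add_sub_cancel] at hb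
      have hsd : 0 < 1 + s * d := by nlinarith
      have h2 : (1 + m * ((1 + s)⁻¹ - 1)) * (1 + s * d) ≤ 1 :=
        (mul_le_mul_of_nonneg_right hb hsd.le).trans h1
      have h3 : (1 + s - m * s) * (1 + s * d) ≤ 1 + s := by
        have e : (1 + s - m * s) * (1 + s * d)
            = (1 + s) * ((1 + m * ((1 + s)⁻¹ - 1)) * (1 + s * d)) := by
          field_simp
          ring
        rw [e]
        nlinarith
      have h4 : s * (d - m) ≤ s * ((m - 1) * d * s) := by nlinarith
      exact le_of_mul_le_mul_left h4 hs
    have hpos2 : 0 < (m - 1) * d := by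
      apply mul_pos <;> linarith
    have := hs ((d - m) / (2 * ((m - 1) * d))) (by
      apply div_pos <;> linarith)
    have e : (m - 1) * d * ((d - m) / (2 * ((m - 1) * d))) = (d - m) / 2 := by
      have h0 := hpos2.ne'
      generalize (m - 1) * d = y at h0
      field_simp
    rw [e] at this
    linarith
  have htr := hker_trace x w hM
  have h0 : ∑ k, w k * (m - hker x w k k) = 0 := by
    simp only [mul_sub, Finset.sum_sub_distrib, htr, ← Finset.sum_mul, hsum]
    ring
  have h1 := (Finset.sum_eq_zero_iff_of_nonneg
    (fun k _ => mul_nonneg (hpos k).le (sub_nonneg.mpr (hle k)))).mp h0 i (Finset.mem_univ i)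
  rcases mul_eq_zero.mp h1 with h | h
  · exact absurd h (hpos i).ne'
  · linarith

lemma jac_entry (hm : 2 ≤ m) (x : Fin n → Fin m → ℝ) (w : Fin n → ℝ)
    (hM : IsUnit (Mmat x w).det) (hd : ∀ i, hker x w i i = m)
    (R : Matrix (Fin n) (Fin n) ℝ)
    (hR : HasFDerivAt (Talg x 0)
      (LinearMap.toContinuousLinearMap (Matrix.toLin' R)) w) (i j : Fin n) :
    R i j = (Pi.single j 1 : Fin n → ℝ) i - w i * hker x w i j ^ 2 / m := by
  have hm' : (2:ℝ) ≤ m := by exact_mod_cast hm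
  have hm0 : (m:ℝ) ≠ 0 := by linarith
  have hline : HasDerivAt (fun t : ℝ => w + t • (Pi.single j 1 : Fin n → ℝ))
      (Pi.single j 1) 0 := by
    simpa using ((hasDerivAt_id (0:ℝ)).smul_const (Pi.single j 1 : Fin n → ℝ)).const_add w
  have hR' : HasFDerivAt (Talg x 0) (LinearMap.toContinuousLinearMap (Matrix.toLin' R))
      (w + (0:ℝ) • (Pi.single j 1 : Fin n → ℝ)) := by simpa using hR
  have h1 := hR'.comp_hasDerivAt (0:ℝ) hline
  have h2 := (hasDerivAt_pi.mp h1) i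
  have hval : (LinearMap.toContinuousLinearMap (Matrix.toLin' R)) (Pi.single j 1) i = R i j := by
    simp
  rw [hval] at h2
  have h3 : HasDerivAt (fun t : ℝ => (w i + t * (Pi.single j 1 : Fin n → ℝ) i) *
      (m - t * hker x w i j ^ 2 / (1 + t * m)) / m)
      ((Pi.single j 1 : Fin n → ℝ) i - w i * hker x w i j ^ 2 / m) 0 := by
    have a1 : HasDerivAt (fun t : ℝ => w i + t * (Pi.single j 1 : Fin n → ℝ) i)
        ((Pi.single j 1 : Fin n → ℝ) i) 0 := by
      simpa using ((hasDerivAt_id (0:ℝ)).mul_const ((Pi.single j 1 : Fin n → ℝ) i)).const_add (w i)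
    have a2 : HasDerivAt (fun t : ℝ => t * hker x w i j ^ 2) (hker x w i j ^ 2) 0 := by
      simpa using (hasDerivAt_id (0:ℝ)).mul_const (hker x w i j ^ 2)
    have a3 : HasDerivAt (fun t : ℝ => 1 + t * (m:ℝ)) (m:ℝ) 0 := by
      simpa using ((hasDerivAt_id (0:ℝ)).mul_const (m:ℝ)).const_add 1
    have a4 := (a1.mul ((a2.div a3 (by simp)).const_sub (m:ℝ))).div_const (m:ℝ)
    refine a4.congr_deriv ?_
    simp
    field_simp
    ring
  refine h2.unique (h3.congr_of_eventuallyEq ?_)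
  have hne : ∀ᶠ t : ℝ in nhds 0, 1 + t * (m:ℝ) ≠ 0 := by
    have : ContinuousAt (fun t : ℝ => 1 + t * (m:ℝ)) 0 := by fun_prop
    exact this.eventually_ne (by simp)
  filter_upwards [hne] with t ht
  have hu := inv_update x w hM j t (by rwa [hd]) i
  rw [hd, hd] at hu
  simp only [Function.comp, Talg, sub_zero, Pi.add_apply, Pi.smul_apply, smul_eq_mul]
  rw [← hu]
  rfl

lemma quad_nonneg (w : Fin n → ℝ) (h : Fin n → Fin n → ℝ) (hw : ∀ i, 0 < w i)
    (hs : ∀ i j, h i j = h j i)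
    (hr : ∀ i j, h i j = ∑ k, w k * (h i k * h k j)) (v : Fin n → ℂ) :
    ∃ q : ℝ, 0 ≤ q ∧
      ∑ i, ∑ j, (starRingEnd ℂ) (v i) * ((h i j ^ 2 : ℝ) : ℂ) * v j = (q : ℂ) := by
  refine ⟨∑ k, ∑ l, w k * w l * Complex.normSq (∑ i, ((h i k * h i l : ℝ) : ℂ) * v i), ?_, ?_⟩
  · refine Finset.sum_nonneg fun k _ => Finset.sum_nonneg fun l _ => ?_
    exact mul_nonneg (mul_nonneg (hw k).le (hw l).le) (Complex.normSq_nonneg _)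
  · have e : ∀ i j, h i j ^ 2 = ∑ k, ∑ l, w k * w l * ((h i k * h i l) * (h j k * h j l)) := by
      intro i j
      rw [sq]
      conv_lhs => rw [hr i j]
      rw [Finset.sum_mul_sum]
      refine Finset.sum_congr rfl fun k _ => Finset.sum_congr rfl fun l _ => ?_
      rw [hs k j, hs l j]
      ring
    have e2 : ∀ i j, (starRingEnd ℂ) (v i) * ((h i j ^ 2 : ℝ) : ℂ) * v j =
        ∑ k, ∑ l, (w k : ℂ) * w l * ((starRingEnd ℂ) (((h i k * h i l : ℝ) : ℂ) * v i) *
          (((h j k * h j l : ℝ) : ℂ) * v j)) := by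
      intro i j
      rw [e]
      push_cast
      rw [Finset.mul_sum, Finset.sum_mul]
      refine Finset.sum_congr rfl fun k _ => ?_
      rw [Finset.mul_sum, Finset.sum_mul]
      refine Finset.sum_congr rfl fun l _ => ?_
      simp only [map_mul, Complex.conj_ofReal]
      ring
    simp only [e2]
    push_cast
    simp only [Complex.normSq_eq_conj_mul_self, map_sum, Finset.sum_mul_sum]
    simp only [Finset.mul_sum]
    have sw : ∀ f : Fin n → Fin n → Fin n → Fin n → ℂ,
        ∑ i, ∑ j, ∑ k, ∑ l, f i j k l = ∑ k, ∑ l, ∑ i, ∑ j, f i j k l := by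
      intro f
      calc ∑ i, ∑ j, ∑ k, ∑ l, f i j k l = ∑ i, ∑ k, ∑ j, ∑ l, f i j k l :=
            Finset.sum_congr rfl fun i _ => Finset.sum_comm
        _ = ∑ k, ∑ i, ∑ j, ∑ l, f i j k l := Finset.sum_comm
        _ = ∑ k, ∑ i, ∑ l, ∑ j, f i j k l :=
            Finset.sum_congr rfl fun k _ => Finset.sum_congr rfl fun i _ => Finset.sum_comm
        _ = ∑ k, ∑ l, ∑ i, ∑ j, f i j k l :=
            Finset.sum_congr rfl fun k _ => Finset.sum_comm
    rw [sw]

lemma quad_le (w : Fin n → ℝ) (K : Fin n → Fin n → ℝ) (c : ℝ) (hw : ∀ i, 0 < w i)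
    (hK : ∀ i j, 0 ≤ K i j) (hs : ∀ i j, K i j = K j i)
    (hr : ∀ i, ∑ j, w j * K i j = c) (v : Fin n → ℂ) :
    ‖∑ i, ∑ j, (starRingEnd ℂ) (v i) * (K i j : ℂ) * v j‖ ≤ c * ∑ i, ‖v i‖ ^ 2 / w i := by
  have b : ∀ i j, ‖(starRingEnd ℂ) (v i) * (K i j : ℂ) * v j‖ ≤
      (w j * K i j * (‖v i‖ ^ 2 / w i)) / 2 + (w i * K j i * (‖v j‖ ^ 2 / w j)) / 2 := by
    intro i j
    rw [norm_mul, norm_mul, Complex.norm_real, RCLike.norm_conj, Real.norm_of_nonneg (hK i j),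
      hs j i]
    have hi := hw i
    have hj := hw j
    have e : (w j * K i j * (‖v i‖ ^ 2 / w i)) / 2 + (w i * K i j * (‖v j‖ ^ 2 / w j)) / 2
        - ‖v i‖ * K i j * ‖v j‖ =
        K i j * ((w j * ‖v i‖ - w i * ‖v j‖) ^ 2 / (2 * w i * w j)) := by
      field_simp
      ring
    have : 0 ≤ K i j * ((w j * ‖v i‖ - w i * ‖v j‖) ^ 2 / (2 * w i * w j)) :=
      mul_nonneg (hK i j) (by positivity)
    linarith
  have t : ∑ i, ∑ j, (w j * K i j * (‖v i‖ ^ 2 / w i)) / 2 = c * (∑ i, ‖v i‖ ^ 2 / w i) / 2 := by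
    rw [Finset.mul_sum, Finset.sum_div]
    refine Finset.sum_congr rfl fun i _ => ?_
    rw [← Finset.sum_div, ← Finset.sum_mul, hr]
  calc _ ≤ ∑ i, ∑ j, ‖(starRingEnd ℂ) (v i) * (K i j : ℂ) * v j‖ :=
        (norm_sum_le _ _).trans (Finset.sum_le_sum fun i _ => norm_sum_le _ _)
    _ ≤ ∑ i, ∑ j, ((w j * K i j * (‖v i‖ ^ 2 / w i)) / 2 +
          (w i * K j i * (‖v j‖ ^ 2 / w j)) / 2) :=
        Finset.sum_le_sum fun i _ => Finset.sum_le_sum fun j _ => b i j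
    _ = _ := by
        simp only [Finset.sum_add_distrib]
        rw [t, Finset.sum_comm (f := fun i j => (w i * K j i * (‖v j‖ ^ 2 / w j)) / 2), t]
        ring

end helpers

/-- Eigenvalue bound for Algorithm I's matrix rate: if the design matrix has full rank
`m ≥ 2` and `w*` is an interior global maximizer of `det M` over the closed simplex, then
all eigenvalues of `R(0)`, the Jacobian at `w*` of the Algorithm I map
`T_0(w)_i = w_i (x_iᵀ M(w)⁻¹ x_i)/m`, are real and lie in the interval `[0, 1]`. -/
theorem stmt_5 {n m : ℕ} (hm : 2 ≤ m) (hnm : m ≤ n)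
    (x : Fin n → Fin m → ℝ) (hrank : (Matrix.of x).rank = m)
    (wstar : Fin n → ℝ) (hpos : ∀ i, 0 < wstar i) (hsum : ∑ i, wstar i = 1)
    (hopt : ∀ v : Fin n → ℝ, (∀ i, 0 ≤ v i) → ∑ i, v i = 1 →
      (Mmat x v).det ≤ (Mmat x wstar).det)
    (R : Matrix (Fin n) (Fin n) ℝ)
    (hR : HasFDerivAt (Talg x 0)
      (LinearMap.toContinuousLinearMap (Matrix.toLin' R)) wstar) :
    ∀ μ : ℂ, Module.End.HasEigenvalue
        (Matrix.toLin' (R.map (Complex.ofReal : ℝ → ℂ))) μ →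
      ∃ r : ℝ, μ = (r : ℂ) ∧ r ∈ Set.Icc (0 : ℝ) 1 := by
  intro μ hμ
  have hM : IsUnit (Mmat x wstar).det :=
    isUnit_iff_ne_zero.mpr (Mmat_posDef x hrank wstar hpos).det_pos.ne'
  have hd := hker_diag hm x hrank wstar hpos hsum hopt
  have hRe := jac_entry hm x wstar hM hd R hR
  have hm' : (2:ℝ) ≤ m := by exact_mod_cast hm
  have hm0 : (m:ℝ) ≠ 0 := by linarith
  have hm0c : (m:ℂ) ≠ 0 := by exact_mod_cast hm0
  obtain ⟨v, hv⟩ := hμ.exists_hasEigenvector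
  have hv0 : v ≠ 0 := hv.2
  have hev := hv.apply_eq_smul
  rw [Matrix.toLin'_apply] at hev
  obtain ⟨q, hq0, hq⟩ := quad_nonneg wstar (hker x wstar) hpos (hker_symm x wstar)
    (hker_repr x wstar hM) v
  have hqle := quad_le wstar (fun i j => hker x wstar i j ^ 2) m hpos
    (fun i j => sq_nonneg _) (fun i j => by simp only [hker_symm x wstar i j]) (fun i => by
      rw [← hd i]
      conv_rhs => rw [hker_repr x wstar hM i i]
      refine Finset.sum_congr rfl fun k _ => ?_
      rw [hker_symm x wstar k i, sq]) v
  rw [hq, Complex.norm_real, Real.norm_of_nonneg hq0] at hqle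
  set S : ℝ := ∑ i, ‖v i‖ ^ 2 / wstar i with hS
  have hSpos : 0 < S := by
    obtain ⟨i, hi⟩ := Function.ne_iff.mp hv0
    refine Finset.sum_pos' (fun k _ => div_nonneg (sq_nonneg _) (hpos k).le)
      ⟨i, Finset.mem_univ i, div_pos (pow_pos (norm_pos_iff.mpr hi) 2) (hpos i)⟩
  have hrow : ∀ i, ∑ j, ((hker x wstar i j ^ 2 : ℝ) : ℂ) * v j
      = m * (1 - μ) * (v i / wstar i) := by
    intro i
    have hwi : (wstar i : ℂ) ≠ 0 := by exact_mod_cast (hpos i).ne'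
    have h := congrFun hev i
    have h2 : ∑ j, ((R i j : ℝ) : ℂ) * v j = μ * v i := h
    have h3 : ∑ j, ((R i j : ℝ) : ℂ) * v j
        = v i - wstar i / m * ∑ j, ((hker x wstar i j ^ 2 : ℝ) : ℂ) * v j := by
      rw [Finset.mul_sum, eq_sub_iff_add_eq, ← Finset.sum_add_distrib]
      rw [Finset.sum_eq_single i]
      · rw [hRe]
        simp only [Pi.single_eq_same]
        push_cast
        ring
      · intro j _ hj
        rw [hRe, Pi.single_eq_of_ne hj.symm]
        push_cast
        ring
      · simp
    rw [h3] at h2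
    field_simp
    field_simp at h2
    linear_combination -h2
  have hmain : (q : ℂ) = m * (1 - μ) * S := by
    rw [← hq, hS]
    push_cast
    rw [Finset.mul_sum]
    refine Finset.sum_congr rfl fun i _ => ?_
    have h := hrow i
    push_cast at h
    simp only [mul_assoc, ← Finset.mul_sum]
    rw [h, ← Complex.conj_mul']
    ring
  have hSc : (S : ℂ) ≠ 0 := by exact_mod_cast hSpos.ne'
  have hmS : 0 < m * S := by
    apply mul_pos _ hSpos
    linarith
  refine ⟨1 - q / (m * S), ?_, ?_, ?_⟩
  · push_cast
    rw [hmain]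
    field_simp
    ring
  · have : q / (m * S) ≤ 1 := by
      rw [div_le_one hmS]; exact hqle
    linarith
  · have : 0 ≤ q / (m * S) := div_nonneg hq0 hmS.le
    linarith
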